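/- Let s be a positive integer and q = 4^{2s+1} = 2^{4s+2}. Then for all integers t, m with 1 ≤ t < m ≤ (q + 2^{2s+2} − 8)/9, there exists an optimal (7, 3)-LRC over F_q with parameters [9m, 7t + 1, 9(m−t)]_q, and there exists an optimal (2, 8)-LRC over F_q with parameters [9m, 2t + 1, 9(m−t)]_q. -/

import Mathlib

/-- The Hamming weight of a vector: the number of nonzero coordinates. -/
def hammingWt {F : Type*} [Zero F] [DecidableEq F] {n : ℕ} (v : Fin n → F) : ℕ :=
  (Finset.univ.filter (fun i => v i ≠ 0)).card

/-- The minimum distance of the linear code `C` is at least `d`. -/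
def MinDistGe {F : Type*} [Field F] [DecidableEq F] {n : ℕ}
    (C : Submodule F (Fin n → F)) (d : ℕ) : Prop :=
  ∀ c ∈ C, c ≠ 0 → d ≤ hammingWt c

/-- The minimum distance of the linear code `C` is exactly `d`. -/
def MinDistEq {F : Type*} [Field F] [DecidableEq F] {n : ℕ}
    (C : Submodule F (Fin n → F)) (d : ℕ) : Prop :=
  MinDistGe C d ∧ ∃ c ∈ C, c ≠ 0 ∧ hammingWt c = d

/-- `C` is an `(r, δ)`-locally repairable code: every coordinate `i` has a repair
group `R` containing `i`, of size at most `r + δ - 1`, such that the punctured code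
`C|_R` has minimum distance at least `δ` (i.e. every codeword whose restriction to
`R` is nonzero has at least `δ` nonzero coordinates inside `R`). -/
def IsLRC {F : Type*} [Field F] [DecidableEq F] {n : ℕ}
    (C : Submodule F (Fin n → F)) (r δ : ℕ) : Prop :=
  ∀ i : Fin n, ∃ R : Finset (Fin n), i ∈ R ∧ R.card ≤ r + δ - 1 ∧
    ∀ c ∈ C, (∃ j ∈ R, c j ≠ 0) → δ ≤ (R.filter (fun j => c j ≠ 0)).card

/-- The parameters `[n, k, d]` attain the Singleton-type bound for `(r, δ)`-LRCs:
`d = n - k + 1 - (⌈k/r⌉ - 1)(δ - 1)`  (here `⌈k/r⌉ = (k + r - 1)/r`). -/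
def SingletonOptimal (n k d r δ : ℕ) : Prop :=
  (d : ℤ) = (n : ℤ) - (k : ℤ) + 1 - ((((k + r - 1) / r : ℕ) : ℤ) - 1) * ((δ : ℤ) - 1)

/-- There exists an optimal `(r, δ)`-LRC over `F` with parameters `[n, k, d]`. -/
def ExistsOptimalLRC (F : Type*) [Field F] [DecidableEq F] (n k d r δ : ℕ) : Prop :=
  ∃ C : Submodule F (Fin n → F),
    Module.finrank F C = k ∧ MinDistEq C d ∧ IsLRC C r δ ∧ SingletonOptimal n k d r δ


open Polynomial in
/-- functions on the curve with pole order at most `n` at infinity -/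
def InL {F : Type*} [Field F] (n : ℕ) (g : F × F → F) : Prop :=
  ∃ P Q : F[X], 2 * P.natDegree ≤ n ∧ (Q = 0 ∨ 2 * Q.natDegree + 3 ≤ n) ∧
    ∀ p : F × F, p.2 ^ 2 + p.2 = p.1 ^ 3 → g p = P.eval p.1 + p.2 * Q.eval p.1

section inl
open Polynomial
variable {F : Type*} [Field F]

lemma InL.mono {n n' : ℕ} {g : F × F → F} (h : InL n g) (hn : n ≤ n') : InL n' g := by
  obtain ⟨P, Q, h1, h2, h3⟩ := h
  exact ⟨P, Q, by omega, by rcases h2 with h | h; exact Or.inl h; exact Or.inr (by omega), h3⟩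

lemma InL.add {n : ℕ} {g g' : F × F → F} (h : InL n g) (h' : InL n g') :
    InL n (fun p => g p + g' p) := by
  obtain ⟨P, Q, h1, h2, h3⟩ := h
  obtain ⟨P', Q', h1', h2', h3'⟩ := h'
  refine ⟨P + P', Q + Q', ?_, ?_, ?_⟩
  · have := natDegree_add_le P P'
    have : max P.natDegree P'.natDegree ≤ n / 2 := max_le (by omega) (by omega)
    omega
  · have := natDegree_add_le Q Q'
    rcases h2 with rfl | h2
    · rcases h2' with rfl | h2'
      · left; simp
      · right; simpa using h2'
    · rcases h2' with rfl | h2'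
      · right; simpa using h2
      · right
        have : max Q.natDegree Q'.natDegree ≤ (n - 3) / 2 := max_le (by omega) (by omega)
        omega
  · intro p hp
    simp only [h3 p hp, h3' p hp, eval_add]; ring

lemma InL.const (n : ℕ) (c : F) : InL n (fun _ => c) :=
  ⟨C c, 0, by simp, Or.inl rfl, by simp⟩

lemma InL.x : InL 2 (fun p : F × F => p.1) :=
  ⟨X, 0, by simp, Or.inl rfl, by simp⟩

lemma InL.y : InL 3 (fun p : F × F => p.2) :=
  ⟨0, 1, by simp, Or.inr (by simp), by simp⟩

lemma InL.mul (h2F : (2 : F) = 0) {n n' : ℕ} {g g' : F × F → F} (h : InL n g) (h' : InL n' g') :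
    InL (n + n') (fun p => g p * g' p) := by
  obtain ⟨P, Q, h1, h2, h3⟩ := h
  obtain ⟨P', Q', h1', h2', h3'⟩ := h'
  refine ⟨P * P' + X ^ 3 * (Q * Q'), (P * Q' + P' * Q) + Q * Q', ?_, ?_, ?_⟩
  · have e1 := natDegree_mul_le (p := P) (q := P')
    have e2 := natDegree_mul_le (p := Q) (q := Q')
    have e3 := natDegree_mul_le (p := X ^ 3) (q := Q * Q')
    have e4 := natDegree_add_le (P * P') (X ^ 3 * (Q * Q'))
    rw [natDegree_X_pow] at e3
    have : max (P * P').natDegree (X ^ 3 * (Q * Q')).natDegree ≤ (n + n') / 2 := by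
      apply max_le
      · omega
      · rcases h2 with rfl | h2
        · simp
        · rcases h2' with rfl | h2'
          · simp
          · omega
    omega
  · have e1 := natDegree_mul_le (p := P) (q := Q')
    have e2 := natDegree_mul_le (p := P') (q := Q)
    have e3 := natDegree_mul_le (p := Q) (q := Q')
    have e4 := natDegree_add_le (P * Q' + P' * Q) (Q * Q')
    have e5 := natDegree_add_le (P * Q') (P' * Q)
    rcases h2 with rfl | h2
    · rcases h2' with rfl | h2'
      · left; simp
      · right; simp only [mul_zero, zero_mul, add_zero]; omega
    · rcases h2' with rfl | h2'
      · right; simp only [mul_zero, zero_mul, add_zero, zero_add]; omega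
      · right
        have a1 : max (P * Q').natDegree (P' * Q).natDegree ≤ (n + n' - 3) / 2 :=
          max_le (by omega) (by omega)
        have a2 : max (P * Q' + P' * Q).natDegree (Q * Q').natDegree ≤ (n + n' - 3) / 2 :=
          max_le (by omega) (by omega)
        omega
  · intro p hp
    simp only [h3 p hp, h3' p hp, eval_add, eval_mul, eval_pow, eval_X]
    linear_combination (Q.eval p.1 * Q'.eval p.1) * hp - (Q.eval p.1 * Q'.eval p.1) * p.2 * h2F

lemma InL.pow (h2F : (2 : F) = 0) {n : ℕ} {g : F × F → F} (h : InL n g) (k : ℕ) :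
    InL (n * k) (fun p => g p ^ k) := by
  induction k with
  | zero => simpa using InL.const 0 (1 : F)
  | succ k ih =>
    have := InL.mul h2F ih h
    simpa [pow_succ, Nat.mul_succ] using this

lemma InL.sum {ι : Type*} (s : Finset ι) {n : ℕ} {g : ι → F × F → F} (h : ∀ i ∈ s, InL n (g i)) :
    InL n (fun p => ∑ i ∈ s, g i p) := by
  classical
  induction s using Finset.induction_on with
  | empty => simpa using InL.const n (0 : F)
  | insert a s ha ih =>
    simp only [Finset.sum_insert ha]
    exact (h a (by simp)).add (ih fun i hi => h i (by simp [hi]))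

lemma normPoly_ne_zero (h2F : (2 : F) = 0) {P Q : F[X]} (h : ¬ (P = 0 ∧ Q = 0)) :
    P ^ 2 + P * Q + X ^ 3 * Q ^ 2 ≠ 0 := by
  have h2 : (2 : F[X]) = 0 := by
    have : (C (2 : F) : F[X]) = 0 := by rw [h2F, C_0]
    rw [← this]; rfl
  intro hN
  by_cases hQ : Q = 0
  · subst hQ
    apply h
    simpa using hN
  by_cases hP : P = 0
  · subst hP
    simp [hQ] at hN
  have key : P * (P + Q) = X ^ 3 * Q ^ 2 := by linear_combination hN - X ^ 3 * Q ^ 2 * h2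
  have hPQ : P + Q ≠ 0 := by
    intro h0
    rw [h0] at key
    simp [hQ] at key
  have d := congrArg natDegree key
  rw [natDegree_mul hP hPQ, natDegree_mul (by simp) (by simp [hQ]), natDegree_X_pow,
    natDegree_pow] at d
  by_cases hlt : Q.natDegree < P.natDegree
  · rw [natDegree_add_eq_left_of_natDegree_lt hlt] at d
    omega
  · have := natDegree_add_le P Q
    rw [max_eq_right (by omega)] at this
    omega

lemma InL.zeros (h2F : (2 : F) = 0) [DecidableEq F] {n : ℕ} {g : F × F → F} (h : InL n g)
    (X' : Finset (F × F)) (hX : ∀ p ∈ X', p.2 ^ 2 + p.2 = p.1 ^ 3) (hne : ∃ p ∈ X', g p ≠ 0) :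
    (X'.filter (fun p => g p = 0)).card ≤ n := by
  obtain ⟨P, Q, h1, h2, h3⟩ := h
  obtain ⟨p0, hp0, hg0⟩ := hne
  have hPQ : ¬ (P = 0 ∧ Q = 0) := by
    rintro ⟨rfl, rfl⟩
    apply hg0
    rw [h3 _ (hX _ hp0)]; simp
  set N := P ^ 2 + P * Q + X ^ 3 * Q ^ 2 with hNdef
  have hN : N ≠ 0 := normPoly_ne_zero h2F hPQ
  have hdeg : N.natDegree ≤ n := by
    have e1 := natDegree_mul_le (p := P) (q := Q)
    have e2 := natDegree_pow_le (p := P) (n := 2)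
    have e3 := natDegree_pow_le (p := Q) (n := 2)
    have e4 := natDegree_mul_le (p := X ^ 3) (q := Q ^ 2)
    rw [natDegree_X_pow] at e4
    refine (natDegree_add_le _ _).trans (max_le ((natDegree_add_le _ _).trans (max_le ?_ ?_)) ?_)
    · omega
    · rcases h2 with rfl | h2
      · simp
      · omega
    · rcases h2 with rfl | h2
      · simp
      · omega
  set Zs := X'.filter (fun p => g p = 0)
  have hz : ∀ p ∈ Zs, P.eval p.1 + p.2 * Q.eval p.1 = 0 ∧ p.2 ^ 2 + p.2 = p.1 ^ 3 := by
    intro p hp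
    rw [Finset.mem_filter] at hp
    exact ⟨by rw [← h3 p (hX p hp.1)]; exact hp.2, hX p hp.1⟩
  have hNev : ∀ p ∈ Zs, N.eval p.1 = 0 := by
    intro p hp
    obtain ⟨ha, hb⟩ := hz p hp
    simp only [hNdef, eval_add, eval_mul, eval_pow, eval_X]
    linear_combination (P.eval p.1 + (p.2 + 1) * Q.eval p.1) * ha - (Q.eval p.1) ^ 2 * hb
      - (P.eval p.1 * Q.eval p.1 * p.2) * h2F
  have hmaps : ∀ p ∈ Zs, p.1 ∈ N.roots.toFinset := by
    intro p hp
    rw [Multiset.mem_toFinset, mem_roots hN]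
    exact hNev p hp
  rw [Finset.card_eq_sum_card_fiberwise hmaps]
  calc _ ≤ ∑ x ∈ N.roots.toFinset, N.roots.count x := ?_
    _ = Multiset.card N.roots := Multiset.toFinset_sum_count_eq _
    _ ≤ N.natDegree := card_roots' _
    _ ≤ n := hdeg
  apply Finset.sum_le_sum
  intro x hx
  rw [count_roots]
  by_cases hQx : Q.eval x = 0
  · by_cases hemp : (Zs.filter (fun p => p.1 = x)) = ∅
    · rw [hemp]; simp
    obtain ⟨p, hp⟩ := Finset.nonempty_iff_ne_empty.mpr hemp
    rw [Finset.mem_filter] at hp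
    obtain ⟨hpZ, rfl⟩ := hp
    obtain ⟨ha, hb⟩ := hz p hpZ
    have hPx : P.eval p.1 = 0 := by simpa [hQx] using ha
    have hdvd : (X - C p.1) ^ 2 ∣ N := by
      obtain ⟨P1, hP1⟩ := dvd_iff_isRoot.mpr hPx
      obtain ⟨Q1, hQ1⟩ := dvd_iff_isRoot.mpr hQx
      refine ⟨P1 ^ 2 + P1 * Q1 + X ^ 3 * Q1 ^ 2, ?_⟩
      rw [hNdef]
      nth_rewrite 1 2 [hP1]
      nth_rewrite 1 2 [hQ1]
      ring
    refine le_trans ?_ ((le_rootMultiplicity_iff hN).mpr hdvd)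
    have hsub : Zs.filter (fun p' => p'.1 = p.1) ⊆ {(p.1, p.2), (p.1, p.2 + 1)} := by
      intro p' hp'
      rw [Finset.mem_filter] at hp'
      obtain ⟨ha', hb'⟩ := hz p' hp'.1
      have : (p'.2 - p.2) * (p'.2 - (p.2 + 1)) = 0 := by
        rw [hp'.2] at hb'
        linear_combination hb' - hb + (p.2 ^ 2 + p.2 - p'.2 * p.2 - p'.2) * h2F
      rcases mul_eq_zero.mp this with h | h
      · simp [Prod.ext_iff, hp'.2, sub_eq_zero.mp h]
      · simp [Prod.ext_iff, hp'.2, sub_eq_zero.mp h]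
    exact (Finset.card_le_card hsub).trans Finset.card_le_two
  · have : (Zs.filter (fun p => p.1 = x)).card ≤ 1 := by
      rw [Finset.card_le_one]
      intro p hp p' hp'
      rw [Finset.mem_filter] at hp hp'
      obtain ⟨ha, -⟩ := hz p hp.1
      obtain ⟨ha', -⟩ := hz p' hp'.1
      rw [hp.2] at ha
      rw [hp'.2] at ha'
      have : Q.eval x * (p.2 - p'.2) = 0 := by linear_combination ha - ha'
      have := (mul_eq_zero.mp this).resolve_left hQx
      exact Prod.ext (hp.2.trans hp'.2.symm) (sub_eq_zero.mp this)
    refine this.trans ?_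
    have : IsRoot N x := by
      rw [Multiset.mem_toFinset, mem_roots hN] at hx
      exact hx
    exact (rootMultiplicity_pos hN).mpr this

end inl

section count
set_option linter.unusedSectionVars false
variable {F : Type*} [Field F] [Fintype F] [DecidableEq F]

/-- the Artin-Schreier map -/
def asHom (h2F : (2 : F) = 0) : F →+ F where
  toFun y := y ^ 2 + y
  map_zero' := by simp
  map_add' a b := by linear_combination (a * b) * h2F

lemma asHom_index (h2F : (2 : F) = 0) : (asHom h2F).range.index = 2 := by
  have hk : Nat.card (asHom h2F).ker = 2 := by
    have : ((asHom h2F).ker : Set F) = (({0, 1} : Finset F) : Set F) := by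
      ext y
      simp only [SetLike.mem_coe, AddMonoidHom.mem_ker, Finset.coe_insert, Finset.coe_singleton,
        Set.mem_insert_iff, Set.mem_singleton_iff]
      change y ^ 2 + y = 0 ↔ _
      constructor
      · intro h
        have : y * (y - 1) = 0 := by linear_combination h - y * h2F
        rcases mul_eq_zero.mp this with h | h
        · exact Or.inl h
        · exact Or.inr (sub_eq_zero.mp h)
      · rintro (rfl | rfl)
        · simp
        · linear_combination h2F
    change Nat.card ((asHom h2F).ker : Set F) = 2
    rw [this]
    simp
  have h1 := (asHom h2F).ker.card_mul_index
  rw [AddSubgroup.index_ker, hk] at h1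
  have h2 := (asHom h2F).range.card_mul_index
  have h3 : 0 < Nat.card (asHom h2F).range := Nat.card_pos
  rw [← h1, mul_comm] at h2
  exact Nat.eq_of_mul_eq_mul_right h3 h2

open Classical in
/-- the quadratic additive character -/
noncomputable def psi (c : F) : ℤ := if ∃ y : F, y ^ 2 + y = c then 1 else -1

lemma psi_add (h2F : (2 : F) = 0) (a b : F) : psi (a + b) = psi a * psi b := by
  have h := AddSubgroup.add_mem_iff_of_index_two (asHom_index h2F) (a := a) (b := b)
  have e : ∀ c : F, c ∈ (asHom h2F).range ↔ ∃ y : F, y ^ 2 + y = c := fun c => Iff.rfl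
  rw [e, e, e] at h
  unfold psi
  by_cases h1 : ∃ y : F, y ^ 2 + y = a <;> by_cases h2 : ∃ y : F, y ^ 2 + y = b <;>
    simp only [h1, h2, iff_true, iff_false, not_true, not_false_iff] at h <;> simp only [h, h1, h2] <;> simp

lemma psi_as (y : F) : psi (y ^ 2 + y) = 1 := by
  unfold psi; rw [if_pos ⟨y, rfl⟩]

lemma psi_zero : psi (0 : F) = 1 := by simpa using psi_as (0 : F)

lemma exists_psi_neg (h2F : (2 : F) = 0) : ∃ c : F, psi c = -1 := by
  by_contra! h
  have : (asHom h2F).range = ⊤ := by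
    rw [eq_top_iff]
    intro c _
    by_contra hc
    apply h c
    unfold psi
    exact if_neg hc
  have h2 := asHom_index h2F
  rw [this] at h2
  simp at h2

lemma card_as (h2F : (2 : F) = 0) (c : F) :
    ((Finset.univ.filter (fun y : F => y ^ 2 + y = c)).card : ℤ) = 1 + psi c := by
  unfold psi
  split_ifs with h
  · obtain ⟨y, rfl⟩ := h
    have : Finset.univ.filter (fun y' : F => y' ^ 2 + y' = y ^ 2 + y) = {y, y + 1} := by
      ext y'
      simp only [Finset.mem_filter, Finset.mem_univ, true_and, Finset.mem_insert,
        Finset.mem_singleton]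
      constructor
      · intro h
        have : (y' - y) * (y' - (y + 1)) = 0 := by
          linear_combination h + (y ^ 2 + y - y' * y - y') * h2F
        rcases mul_eq_zero.mp this with h | h
        · exact Or.inl (sub_eq_zero.mp h)
        · exact Or.inr (sub_eq_zero.mp h)
      · rintro (rfl | rfl)
        · rfl
        · linear_combination (y + 1) * h2F
    rw [this, Finset.card_pair (by simp)]
    norm_num
  · have : Finset.univ.filter (fun y' : F => y' ^ 2 + y' = c) = ∅ := by
      ext y'
      simp only [Finset.mem_filter, Finset.mem_univ, true_and, Finset.notMem_empty, iff_false]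
      exact fun hh => h ⟨y', hh⟩
    rw [this]; simp

lemma psi_inner (h2F : (2 : F) = 0) (hsq : ∀ c : F, ∃ x, x ^ 2 = c) (h : F) :
    ∑ x : F, psi (x ^ 2 * h + x * h ^ 2) = if h ^ 4 = h then (Fintype.card F : ℤ) else 0 := by
  have e : ∀ x : F, psi (x ^ 2 * h + x * h ^ 2) = psi (x ^ 2 * (h + h ^ 4)) := by
    intro x
    have : x ^ 2 * h + x * h ^ 2 = x ^ 2 * (h + h ^ 4) + ((x * h ^ 2) ^ 2 + x * h ^ 2) := by
      linear_combination (- (x ^ 2 * h ^ 4)) * h2F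
    rw [this, psi_add h2F, psi_as, mul_one]
  simp only [e]
  split_ifs with hh
  · have : h + h ^ 4 = 0 := by rw [hh]; linear_combination h * h2F
    simp [this, psi_zero]
  · have hne : h + h ^ 4 ≠ 0 := by
      intro h0
      apply hh
      linear_combination h0 - h * h2F
    obtain ⟨c, hc⟩ := exists_psi_neg h2F
    obtain ⟨x0, hx0⟩ := hsq (c / (h + h ^ 4))
    have hx : psi (x0 ^ 2 * (h + h ^ 4)) = -1 := by
      rw [hx0, div_mul_cancel₀ _ hne, hc]
    have := Equiv.sum_comp (Equiv.addRight x0) (fun x : F => psi (x ^ 2 * (h + h ^ 4)))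
    have e2 : ∀ x : F, psi ((x + x0) ^ 2 * (h + h ^ 4)) = - psi (x ^ 2 * (h + h ^ 4)) := by
      intro x
      have : (x + x0) ^ 2 * (h + h ^ 4) = x ^ 2 * (h + h ^ 4) + x0 ^ 2 * (h + h ^ 4) := by
        linear_combination (x * x0 * (h + h ^ 4)) * h2F
      rw [this, psi_add h2F, hx]; ring
    simp only [Equiv.coe_addRight, e2, Finset.sum_neg_distrib] at this
    linarith

lemma cube_one {w : F} (hw : w ^ 2 + w + 1 = 0) {h : F} (hh : h ^ 3 = 1) :
    h = 1 ∨ h = w ∨ h = w ^ 2 := by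
  have : (h - 1) * ((h - w) * (h - w ^ 2)) = 0 := by
    have hw3 : w ^ 3 = 1 := by linear_combination (w - 1) * hw
    linear_combination hh - (h - 1) * h * hw + (h - 1) * hw3
  rcases mul_eq_zero.mp this with h | h
  · exact Or.inl (sub_eq_zero.mp h)
  rcases mul_eq_zero.mp h with h | h
  · exact Or.inr (Or.inl (sub_eq_zero.mp h))
  · exact Or.inr (Or.inr (sub_eq_zero.mp h))

lemma w_facts (h2F : (2 : F) = 0) {w : F} (hw : w ^ 2 + w + 1 = 0) :
    w ≠ 0 ∧ w ≠ 1 ∧ w ^ 2 ≠ 1 ∧ w ≠ w ^ 2 ∧ w ^ 2 ≠ 0 ∧ w ^ 3 = 1 := by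
  have hw0 : w ≠ 0 := by rintro rfl; simp at hw
  have hw1 : w ≠ 1 := by
    rintro rfl
    have : (1 : F) = 0 := by linear_combination hw - h2F
    exact one_ne_zero this
  have hw3 : w ^ 3 = 1 := by linear_combination (w - 1) * hw
  refine ⟨hw0, hw1, ?_, ?_, pow_ne_zero _ hw0, hw3⟩
  · intro h; apply hw1; linear_combination hw3 - w * h
  · intro h
    apply hw1
    have : w * (w - 1) = 0 := by linear_combination -h
    exact sub_eq_zero.mp ((mul_eq_zero.mp this).resolve_left hw0)

lemma S_sq (h2F : (2 : F) = 0) (hsq : ∀ c : F, ∃ x, x ^ 2 = c) {w : F} (hw : w ^ 2 + w + 1 = 0) :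
    (∑ x : F, psi (x ^ 3)) ^ 2 = 4 * (Fintype.card F : ℤ) := by
  obtain ⟨hw0, hw1, hw21, hw2, hw20, hw3⟩ := w_facts h2F hw
  have step : (∑ x : F, psi (x ^ 3)) ^ 2 =
      ∑ h : F, psi (h ^ 3) * ∑ x : F, psi (x ^ 2 * h + x * h ^ 2) := by
    rw [sq, Finset.sum_mul]
    have : ∀ x : F, psi (x ^ 3) * ∑ y : F, psi (y ^ 3) =
        ∑ h : F, psi (h ^ 3) * psi (x ^ 2 * h + x * h ^ 2) := by
      intro x
      rw [← Equiv.sum_comp (Equiv.addLeft x) (fun y : F => psi (y ^ 3)), Finset.mul_sum]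
      apply Finset.sum_congr rfl
      intro h _
      rw [← psi_add h2F, ← psi_add h2F]
      congr 1
      simp only [Equiv.coe_addLeft]
      linear_combination (x ^ 3 + x ^ 2 * h + x * h ^ 2) * h2F
    simp only [this]
    rw [Finset.sum_comm]
    simp only [Finset.mul_sum]
  rw [step]
  simp only [psi_inner h2F hsq]
  have : ∀ h : F, psi (h ^ 3) * (if h ^ 4 = h then (Fintype.card F : ℤ) else 0) =
      if h ^ 4 = h then (Fintype.card F : ℤ) else 0 := by
    intro h
    split_ifs with hh
    · have : psi (h ^ 3) = 1 := by
        by_cases h0 : h = 0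
        · subst h0; simpa using psi_zero
        · have : h ^ 3 = 1 := by
            have : h * (h ^ 3 - 1) = 0 := by linear_combination hh
            exact sub_eq_zero.mp ((mul_eq_zero.mp this).resolve_left h0)
          rw [this]
          have e : (1 : F) = w ^ 2 + w := by linear_combination -hw + h2F
          rw [e, psi_as]
      rw [this, one_mul]
    · simp
  simp only [this]
  rw [← Finset.sum_filter, Finset.sum_const]
  have hc : (Finset.univ.filter (fun h : F => h ^ 4 = h)) = {0, 1, w, w ^ 2} := by
    ext h
    simp only [Finset.mem_filter, Finset.mem_univ, true_and, Finset.mem_insert,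
        Finset.mem_singleton]
    constructor
    · intro hh
      by_cases h0 : h = 0
      · exact Or.inl h0
      · right
        apply cube_one hw
        have : h * (h ^ 3 - 1) = 0 := by linear_combination hh
        exact sub_eq_zero.mp ((mul_eq_zero.mp this).resolve_left h0)
    · rintro (rfl | rfl | rfl | rfl)
      · simp
      · simp
      · linear_combination h * hw3
      · linear_combination (w ^ 2 * (w ^ 3 + 1)) * hw3
  rw [hc, Finset.card_insert_of_notMem, Finset.card_insert_of_notMem, Finset.card_insert_of_notMem]
  · simp
  · simpa using hw2
  · simp [hw1.symm, hw21.symm]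
  · simp [hw0.symm, hw20.symm]

/-- the affine points of the curve -/
def curvePts (F : Type*) [Field F] [Fintype F] [DecidableEq F] : Finset (F × F) :=
  Finset.univ.filter (fun p => p.2 ^ 2 + p.2 = p.1 ^ 3)

lemma card_curvePts (h2F : (2 : F) = 0) :
    ((curvePts F).card : ℤ) = Fintype.card F + ∑ x : F, psi (x ^ 3) := by
  have h1 : (curvePts F).card =
      ∑ x : F, (Finset.univ.filter (fun y : F => y ^ 2 + y = x ^ 3)).card := by
    unfold curvePts
    simp only [Finset.card_filter]
    rw [Fintype.sum_prod_type]
  rw [h1]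
  push_cast
  simp only [card_as h2F, Finset.sum_add_distrib]
  simp

/-- the good points -/
def goodPts (F : Type*) [Field F] [Fintype F] [DecidableEq F] : Finset (F × F) :=
  (curvePts F).filter (fun p => p.2 ^ 2 + p.2 ≠ 0 ∧ p.2 ^ 2 + p.2 + 1 ≠ 0)

/-- the map to the line -/
def zmap {F : Type*} [Field F] (p : F × F) : F := p.2 + (p.1 ^ 3)⁻¹

lemma mem_goodPts (p : F × F) : p ∈ goodPts F ↔ p.2 ^ 2 + p.2 = p.1 ^ 3 ∧
    p.2 ^ 2 + p.2 ≠ 0 ∧ p.2 ^ 2 + p.2 + 1 ≠ 0 := by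
  simp [goodPts, curvePts]

lemma card_goodPts (h2F : (2 : F) = 0) {w : F} (hw : w ^ 2 + w + 1 = 0) :
    (goodPts F).card + 8 = (curvePts F).card := by
  obtain ⟨hw0, hw1, hw21, hw2, hw20, hw3⟩ := w_facts h2F hw
  rw [← Finset.card_filter_add_card_filter_not (s := curvePts F)
    (fun p => p.2 ^ 2 + p.2 ≠ 0 ∧ p.2 ^ 2 + p.2 + 1 ≠ 0)]
  change _ = (goodPts F).card + _
  congr 1
  have : (curvePts F).filter (fun p => ¬ (p.2 ^ 2 + p.2 ≠ 0 ∧ p.2 ^ 2 + p.2 + 1 ≠ 0)) =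
      (({0} : Finset F) ×ˢ {0, 1}) ∪ (({1, w, w ^ 2} : Finset F) ×ˢ {w, w ^ 2}) := by
    ext ⟨x, y⟩
    simp only [curvePts, Finset.mem_filter, Finset.mem_univ, true_and, Finset.mem_union,
      Finset.mem_product, Finset.mem_insert, Finset.mem_singleton, not_and_or, not_not]
    constructor
    · rintro ⟨h1, h2 | h2⟩
      · left
        constructor
        · rw [h2] at h1
          exact pow_eq_zero_iff (by norm_num) |>.mp h1.symm
        · have : y * (y - 1) = 0 := by linear_combination h2 - y * h2F
          rcases mul_eq_zero.mp this with h | h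
          · exact Or.inl h
          · exact Or.inr (sub_eq_zero.mp h)
      · right
        constructor
        · apply cube_one hw
          linear_combination h2 - h1 - h2F
        · have : (y - w) * (y - w ^ 2) = 0 := by
            linear_combination h2 - y * hw + (w - 1) * hw
          rcases mul_eq_zero.mp this with h | h
          · exact Or.inl (sub_eq_zero.mp h)
          · exact Or.inr (sub_eq_zero.mp h)
    · rintro (⟨rfl, rfl | rfl⟩ | ⟨hx, hy⟩)
      · simp
      · constructor
        · linear_combination h2F
        · left; linear_combination h2F
      · have hx3 : x ^ 3 = 1 := by
          rcases hx with rfl | rfl | rfl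
          · simp
          · exact hw3
          · linear_combination (w ^ 3 + 1) * hw3
        have hy2 : y ^ 2 + y + 1 = 0 := by
          rcases hy with rfl | rfl
          · exact hw
          · linear_combination hw + w * hw3
        refine ⟨?_, Or.inr hy2⟩
        rw [hx3]
        linear_combination hy2 - h2F
  rw [this, Finset.card_union_of_disjoint, Finset.card_product, Finset.card_product,
    Finset.card_insert_of_notMem (a := (1 : F)), Finset.card_pair hw2, Finset.card_pair,
    Finset.card_singleton]
  · exact zero_ne_one
  · simp [hw1.symm, hw21.symm]
  · rw [Finset.disjoint_left]
    rintro ⟨x, y⟩ h1 h2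
    simp only [Finset.mem_product, Finset.mem_insert, Finset.mem_singleton] at h1 h2
    obtain ⟨rfl, -⟩ := h1
    rcases h2.1 with h | h | h
    · exact zero_ne_one h
    · exact hw0 h.symm
    · exact hw20 h.symm

lemma card_cube (h2F : (2 : F) = 0) {w : F} (hw : w ^ 2 + w + 1 = 0) {x : F} (hx : x ≠ 0) :
    (Finset.univ.filter (fun x' : F => x' ^ 3 = x ^ 3)).card = 3 := by
  obtain ⟨hw0, hw1, hw21, hw2, hw20, hw3⟩ := w_facts h2F hw
  have : Finset.univ.filter (fun x' : F => x' ^ 3 = x ^ 3) =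
      ({1, w, w ^ 2} : Finset F).image (fun u => u * x) := by
    ext x'
    simp only [Finset.mem_filter, Finset.mem_univ, true_and, Finset.mem_image, Finset.mem_insert,
        Finset.mem_singleton]
    constructor
    · intro h
      refine ⟨x' / x, cube_one hw ?_, by field_simp⟩
      rw [div_pow, h, div_self (pow_ne_zero _ hx)]
    · rintro ⟨u, hu, rfl⟩
      have : u ^ 3 = 1 := by
        rcases hu with rfl | rfl | rfl
        · simp
        · exact hw3
        · linear_combination (w ^ 3 + 1) * hw3
      rw [mul_pow, this, one_mul]
  rw [this, Finset.card_image_of_injective _ (mul_left_injective₀ hx),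
    Finset.card_insert_of_notMem, Finset.card_pair hw2]
  simp [hw1.symm, hw21.symm]

lemma eq_inv_iff' {a : F} (ha : a ≠ 0) (b : F) : b = a⁻¹ ↔ b * a = 1 := by
  constructor
  · rintro rfl; exact inv_mul_cancel₀ ha
  · exact eq_inv_of_mul_eq_one_left

lemma card_fibre (h2F : (2 : F) = 0) {w : F} (hw : w ^ 2 + w + 1 = 0) {p : F × F}
    (hp : p ∈ goodPts F) : ((goodPts F).filter (fun p' => zmap p' = zmap p)).card = 9 := by
  obtain ⟨x, y⟩ := p
  rw [mem_goodPts] at hp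
  obtain ⟨h1, h2, h3⟩ := hp
  simp only at h1 h2 h3
  have hx : x ≠ 0 := by rintro rfl; apply h2; rw [h1]; simp
  have hy0 : y ≠ 0 := by rintro rfl; simp at h2
  have hy1 : y + 1 ≠ 0 := by
    intro h; apply h2; linear_combination y * h
  -- the fibre equation
  have hfib : ∀ x' y' : F, (x', y') ∈ goodPts F → (zmap (x', y') = zmap (x, y) ↔
      y' = y ∨ y' = (y + 1)⁻¹ ∨ y' = (y + 1) * y⁻¹) := by
    intro x' y' hp'
    rw [mem_goodPts] at hp'
    obtain ⟨h1', h2', h3'⟩ := hp'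
    simp only at h1' h2' h3'
    unfold zmap
    simp only
    rw [← h1, ← h1']
    have e1 : y' + (y' ^ 2 + y')⁻¹ = y + (y ^ 2 + y)⁻¹ ↔
        (y' - y) * ((y' * (y + 1) - 1) * (y' * y - (y + 1))) = 0 := by
      rw [← sub_eq_zero (a := y' + (y' ^ 2 + y')⁻¹)]
      have : (y' - y) * ((y' * (y + 1) - 1) * (y' * y - (y + 1))) =
        (y' + (y' ^ 2 + y')⁻¹ - (y + (y ^ 2 + y)⁻¹)) * ((y' ^ 2 + y') * (y ^ 2 + y)) := by
        have i1 : (y' ^ 2 + y')⁻¹ * (y' ^ 2 + y') = 1 := inv_mul_cancel₀ h2'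
        have i2 : (y ^ 2 + y)⁻¹ * (y ^ 2 + y) = 1 := inv_mul_cancel₀ h2
        have : (y' + (y' ^ 2 + y')⁻¹ - (y + (y ^ 2 + y)⁻¹)) * ((y' ^ 2 + y') * (y ^ 2 + y))
          = (y' - y) * ((y' ^ 2 + y') * (y ^ 2 + y)) + (y ^ 2 + y) - (y' ^ 2 + y') := by
          linear_combination (y ^ 2 + y) * i1 - (y' ^ 2 + y') * i2
        rw [this]
        linear_combination ((-1) * y ^ 2 * y' ^ 2 + (-2) * y ^ 1 * y' ^ 2 + (1) * y ^ 1 * y' ^ 1 + (1) * y ^ 0 * y' ^ 1 + (1) * y ^ 3 * y' ^ 1 + (2) * y ^ 2 * y' ^ 1 + (-1) * y ^ 2 * y' ^ 0 + (-1) * y ^ 1 * y' ^ 0) * h2F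
      rw [this]
      simp [h2, h2']
    rw [e1, mul_eq_zero, mul_eq_zero, sub_eq_zero, sub_eq_zero, sub_eq_zero]
    refine or_congr Iff.rfl (or_congr ?_ ?_)
    · exact (eq_inv_iff' hy1 y').symm
    · rw [← div_eq_mul_inv, eq_div_iff hy0]
  have hmaps : ∀ p' ∈ (goodPts F).filter (fun p' => zmap p' = zmap (x, y)),
      p'.2 ∈ ({y, (y + 1)⁻¹, (y + 1) * y⁻¹} : Finset F) := by
    rintro ⟨x', y'⟩ hp'
    rw [Finset.mem_filter] at hp'
    simpa using (hfib x' y' hp'.1).mp hp'.2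
  rw [Finset.card_eq_sum_card_fiberwise hmaps]
  have hcard : ∀ x' y' : F, (x', y') ∈ goodPts F → zmap (x', y') = zmap (x, y) →
      (((goodPts F).filter (fun p' => zmap p' = zmap (x, y))).filter (fun p' => p'.2 = y')).card
        = 3 := by
    intro x' y' hp' hz
    have hp'' := hp'
    rw [mem_goodPts] at hp''
    obtain ⟨h1', h2', h3'⟩ := hp''
    simp only at h1' h2' h3'
    have hx' : x' ≠ 0 := by rintro rfl; apply h2'; rw [h1']; simp
    rw [← card_cube h2F hw hx',
      ← Finset.card_map (s := Finset.univ.filter (fun u : F => u ^ 3 = x' ^ 3))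
        ⟨fun u : F => (u, y'), fun a b h => (Prod.mk.inj h).1⟩]
    refine congrArg Finset.card ?_
    ext ⟨a, b⟩
    simp only [Finset.mem_filter, mem_goodPts, Finset.mem_map, Finset.mem_univ, true_and,
      Function.Embedding.coeFn_mk, Prod.mk.injEq]
    constructor
    · rintro ⟨⟨⟨g1, g2, g3⟩, g4⟩, rfl⟩
      exact ⟨a, by rw [← g1, h1'], rfl⟩
    · rintro ⟨u, hu, h⟩
      obtain ⟨rfl, rfl⟩ := Prod.mk.inj h
      refine ⟨⟨⟨by rw [h1', hu], h2', h3'⟩, ?_⟩, rfl⟩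
      rw [← hz]
      unfold zmap
      simp only
      rw [hu]
  have g1 : (x, y) ∈ goodPts F := by rw [mem_goodPts]; exact ⟨h1, h2, h3⟩
  have g2 : (y * (x ^ 2)⁻¹, (y + 1)⁻¹) ∈ goodPts F := by
    rw [mem_goodPts]
    have e1 : ((y + 1)⁻¹) ^ 2 + (y + 1)⁻¹ = y / (y + 1) ^ 2 := by
      field_simp
      linear_combination h2F
    have e2 : (y * (x ^ 2)⁻¹) ^ 3 = y / (y + 1) ^ 2 := by
      have : (y * (x ^ 2)⁻¹) ^ 3 = y ^ 3 * ((x ^ 3) ^ 2)⁻¹ := by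
        rw [mul_pow, inv_pow, ← pow_mul, ← pow_mul]
      rw [this, ← h1]
      have : y ^ 2 + y = y * (y + 1) := by ring
      rw [this]
      field_simp
    have e3 : y / (y + 1) ^ 2 + 1 = (y ^ 2 + y + 1) / (y + 1) ^ 2 := by
      field_simp
      linear_combination y * h2F
    refine ⟨by rw [e1, e2], ?_, ?_⟩
    · simp only [e1]; exact div_ne_zero hy0 (pow_ne_zero _ hy1)
    · simp only [e1, e3]; exact div_ne_zero h3 (pow_ne_zero _ hy1)
  have g3 : ((y + 1) * (x ^ 2)⁻¹, (y + 1) * y⁻¹) ∈ goodPts F := by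
    rw [mem_goodPts]
    have e1 : ((y + 1) * y⁻¹) ^ 2 + (y + 1) * y⁻¹ = (y + 1) / y ^ 2 := by
      field_simp
      linear_combination y * h2F
    have e2 : ((y + 1) * (x ^ 2)⁻¹) ^ 3 = (y + 1) / y ^ 2 := by
      have : ((y + 1) * (x ^ 2)⁻¹) ^ 3 = (y + 1) ^ 3 * ((x ^ 3) ^ 2)⁻¹ := by
        rw [mul_pow, inv_pow, ← pow_mul, ← pow_mul]
      rw [this, ← h1]
      have : y ^ 2 + y = y * (y + 1) := by ring
      rw [this]
      field_simp
    have e3 : (y + 1) / y ^ 2 + 1 = (y ^ 2 + y + 1) / y ^ 2 := by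
      field_simp
      ring
    refine ⟨by rw [e1, e2], ?_, ?_⟩
    · simp only [e1]; exact div_ne_zero hy1 (pow_ne_zero _ hy0)
    · simp only [e1, e3]; exact div_ne_zero h3 (pow_ne_zero _ hy0)
  have d1 : y ≠ (y + 1)⁻¹ := by
    intro h
    rw [eq_inv_iff' hy1] at h
    apply h3; linear_combination h + h2F
  have d2 : y ≠ (y + 1) * y⁻¹ := by
    intro h
    rw [← div_eq_mul_inv, eq_div_iff hy0] at h
    apply h3; linear_combination h + (y + 1) * h2F
  have d3 : (y + 1)⁻¹ ≠ (y + 1) * y⁻¹ := by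
    intro h
    rw [← div_eq_mul_inv, eq_div_iff hy0, inv_mul_eq_iff_eq_mul₀ hy1] at h
    apply h3; linear_combination - h
  rw [Finset.sum_insert, Finset.sum_insert, Finset.sum_singleton,
    hcard _ _ g1 rfl, hcard _ _ g2 ((hfib _ _ g2).mpr (by simp)),
    hcard _ _ g3 ((hfib _ _ g3).mpr (by simp))]
  · norm_num
  · rw [Finset.mem_singleton]; exact d3
  · rw [Finset.mem_insert, Finset.mem_singleton, not_or]; exact ⟨d1, d2⟩

end count

section core
set_option linter.unusedSectionVars false
open Polynomial
variable {F : Type*} [Field F] [DecidableEq F]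

/-- local coefficient -/
def lcoef {r t : ℕ} (j0 : Fin r) (v : (Fin t → Fin r → F) × F) (b : F) (j : Fin r) : F :=
  (∑ i : Fin t, b ^ (i : ℕ) * v.1 i j) + if j = j0 then v.2 * b ^ t else 0

/-- local coefficient polynomial -/
noncomputable def lpoly {r t : ℕ} (j0 : Fin r) (v : (Fin t → Fin r → F) × F) (j : Fin r) : F[X] :=
  (∑ i : Fin t, C (v.1 i j) * X ^ (i : ℕ)) + if j = j0 then C v.2 * X ^ t else 0

lemma lpoly_eval {r t : ℕ} (j0 : Fin r) (v : (Fin t → Fin r → F) × F) (b : F) (j : Fin r) :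
    (lpoly j0 v j).eval b = lcoef j0 v b j := by
  unfold lpoly lcoef
  rw [eval_add, eval_finset_sum]
  congr 1
  · apply Finset.sum_congr rfl; intro i _; rw [eval_mul, eval_C, eval_pow, eval_X, mul_comm]
  · split_ifs <;> simp

lemma lpoly_coeff {r t : ℕ} (j0 : Fin r) (v : (Fin t → Fin r → F) × F) (j : Fin r) (i : Fin t) :
    (lpoly j0 v j).coeff i = v.1 i j := by
  unfold lpoly
  rw [coeff_add, finset_sum_coeff]
  have : (if j = j0 then C v.2 * X ^ t else 0 : F[X]).coeff (i : ℕ) = 0 := by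
    split_ifs
    · rw [coeff_C_mul_X_pow, if_neg (by have := i.2; omega)]
    · simp
  rw [this, add_zero, Finset.sum_eq_single i]
  · simp
  · intro k _ hk
    rw [coeff_C_mul_X_pow, if_neg (fun h => hk (Fin.ext h.symm))]
  · simp

lemma lpoly_coeff_top {r t : ℕ} (j0 : Fin r) (v : (Fin t → Fin r → F) × F) :
    (lpoly j0 v j0).coeff t = v.2 := by
  unfold lpoly
  rw [coeff_add, finset_sum_coeff, Finset.sum_eq_zero, if_pos rfl]
  · simp
  · intro k _
    rw [coeff_C_mul_X_pow, if_neg (by have := k.2; omega)]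

lemma lpoly_natDegree {r t : ℕ} (j0 : Fin r) (v : (Fin t → Fin r → F) × F) (j : Fin r) :
    (lpoly j0 v j).natDegree ≤ t := by
  unfold lpoly
  refine natDegree_add_le_of_degree_le ?_ ?_
  · apply natDegree_sum_le_of_forall_le
    intro i _
    exact (natDegree_C_mul_X_pow_le _ _).trans i.2.le
  · split_ifs
    · exact natDegree_C_mul_X_pow_le _ _
    · simp

/-- evaluation of a generic function of the code at a point -/
def cw {r t : ℕ} (j0 : Fin r) (W : Fin r → F × F → F) (v : (Fin t → Fin r → F) × F)
    (p : F × F) : F :=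
  ∑ j, lcoef j0 v (zmap p) j * (W j p * (p.1 ^ 3)⁻¹)

/-- the encoding map -/
def encode {r t n : ℕ} (j0 : Fin r) (W : Fin r → F × F → F) (e : Fin n → F × F) :
    ((Fin t → Fin r → F) × F) →ₗ[F] (Fin n → F) where
  toFun v := fun i => cw j0 W v (e i)
  map_add' v v' := by
    funext i
    simp only [cw, lcoef, Pi.add_apply, Prod.fst_add, Prod.snd_add]
    rw [← Finset.sum_add_distrib]
    apply Finset.sum_congr rfl
    intro j _
    simp only [mul_add, Finset.sum_add_distrib]
    split_ifs <;> ring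
  map_smul' c v := by
    funext i
    simp only [cw, lcoef, Pi.smul_apply, Prod.smul_fst, Prod.smul_snd, smul_eq_mul,
      RingHom.id_apply]
    rw [Finset.mul_sum]
    apply Finset.sum_congr rfl
    intro j _
    have : ∑ x : Fin t, zmap (e i) ^ (x : ℕ) * (c * v.1 x j) =
        c * ∑ x : Fin t, zmap (e i) ^ (x : ℕ) * v.1 x j := by
      rw [Finset.mul_sum]; apply Finset.sum_congr rfl; intro x _; ring
    rw [this]
    split_ifs <;> ring

lemma cw_global (h2F : (2 : F) = 0) {r t : ℕ} (j0 : Fin r) (W : Fin r → F × F → F)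
    (hW0 : ∀ p, W j0 p = p.1 ^ 3) (hWL : ∀ j, InL 9 (W j)) (v : (Fin t → Fin r → F) × F) :
    ∃ g : F × F → F, InL (9 * t) g ∧ ∀ p : F × F, p.1 ≠ 0 → g p = p.1 ^ (3 * t) * cw j0 W v p := by
  have hZ : InL 9 (fun p : F × F => p.1 ^ 3 * p.2 + 1) := by
    have := (((InL.x (F := F)).pow h2F 3).mul h2F InL.y).add (InL.const _ 1)
    simpa using this
  have hx3 : InL 9 (fun p : F × F => p.1 ^ 3) :=
    ((InL.x (F := F)).pow h2F 3).mono (by norm_num)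
  refine ⟨fun p => (∑ i : Fin t, ∑ j : Fin r, v.1 i j *
      ((p.1 ^ 3 * p.2 + 1) ^ (i : ℕ) * (p.1 ^ 3) ^ (t - 1 - i) * W j p))
      + v.2 * (p.1 ^ 3 * p.2 + 1) ^ t, ?_, ?_⟩
  · apply InL.add
    · apply InL.sum
      intro i _
      apply InL.sum
      intro j _
      have := (InL.const 0 (v.1 i j)).mul h2F
        (((hZ.pow h2F i).mul h2F (hx3.pow h2F (t - 1 - i))).mul h2F (hWL j))
      refine this.mono ?_
      have := i.2
      omega
    · simpa using (InL.const 0 v.2).mul h2F (hZ.pow h2F t)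
  · intro p hp
    have hp3 : p.1 ^ 3 ≠ 0 := pow_ne_zero _ hp
    have hz : p.1 ^ 3 * p.2 + 1 = p.1 ^ 3 * zmap p := by
      unfold zmap; rw [mul_add, mul_inv_cancel₀ hp3]
    simp only [hz, cw, lcoef]
    simp only [add_mul, Finset.sum_add_distrib, mul_add, ite_mul, zero_mul]
    congr 1
    · rw [Finset.sum_comm, Finset.mul_sum]
      apply Finset.sum_congr rfl
      intro j _
      rw [Finset.sum_mul, Finset.mul_sum]
      apply Finset.sum_congr rfl
      intro i _
      have e : p.1 ^ (3 * t) = (p.1 ^ 3) ^ (i : ℕ) * (p.1 ^ 3) ^ (t - 1 - i) * p.1 ^ 3 := by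
        rw [← pow_add, ← pow_succ, ← pow_mul]
        congr 2
        have := i.2
        omega
      rw [e, mul_pow]
      field_simp
    · rw [Finset.sum_ite_eq' Finset.univ j0]
      simp only [Finset.mem_univ, if_true]
      rw [hW0, mul_inv_cancel₀ hp3, mul_pow, pow_mul]
      ring

lemma core (h2F : (2 : F) = 0) (m t r : ℕ) (htm : t < m) (hr : r ≤ 9) (j0 : Fin r)
    (X' : Finset (F × F)) (A : Finset F) (hA : A.card = m)
    (hX : ∀ p ∈ X', p.2 ^ 2 + p.2 = p.1 ^ 3 ∧ p.1 ≠ 0)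
    (hXA : ∀ p ∈ X', zmap p ∈ A)
    (hfib : ∀ a ∈ A, (X'.filter (fun p => zmap p = a)).card = 9)
    (W : Fin r → F × F → F) (hW0 : ∀ p, W j0 p = p.1 ^ 3) (hWL : ∀ j, InL 9 (W j))
    (hloc : ∀ (b : F) (v : Fin r → F), v ≠ 0 → ∃ P : F[X], P ≠ 0 ∧ P.natDegree + 1 ≤ r ∧
      ∀ p : F × F, p.1 ≠ 0 → zmap p = b → ∑ j, v j * W j p = 0 → P.eval p.1 = 0) :
    ExistsOptimalLRC F (9 * m) (r * t + 1) (9 * (m - t)) r (10 - r) := by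
  have hr0 : 0 < r := j0.pos
  have hXcard : X'.card = 9 * m := by
    rw [Finset.card_eq_sum_card_fiberwise hXA, Finset.sum_congr rfl hfib]
    simp [hA, mul_comm]
  let e0 : Fin (9 * m) ≃ X' := (X'.equivFinOfCardEq hXcard).symm
  let e : Fin (9 * m) → F × F := fun i => (e0 i : F × F)
  have heX : ∀ i, e i ∈ X' := fun i => (e0 i).2
  have hcnt : ∀ (Pr : F × F → Prop) [DecidablePred Pr],
      (Finset.univ.filter (fun i => Pr (e i))).card = (X'.filter Pr).card := by
    intro Pr _
    apply Finset.card_bij (fun i _ => e i)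
    · intro i hi
      simp only [Finset.mem_filter, Finset.mem_univ, true_and] at hi
      exact Finset.mem_filter.mpr ⟨heX i, hi⟩
    · intro i _ i' _ h
      exact e0.injective (Subtype.ext h)
    · intro p hp
      rw [Finset.mem_filter] at hp
      refine ⟨e0.symm ⟨p, hp.1⟩, ?_, ?_⟩
      · simp [e, hp.2]
      · simp [e]
  -- local zeros
  have hzl : ∀ (b : F) (v : (Fin t → Fin r → F) × F), lcoef j0 v b ≠ 0 →
      (X'.filter (fun p => zmap p = b ∧ cw j0 W v p = 0)).card + 1 ≤ r := by
    intro b v hv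
    obtain ⟨P, hP0, hPd, hP⟩ := hloc b _ hv
    refine le_trans (Nat.add_le_add_right ?_ 1) hPd
    refine le_trans ?_ ((Multiset.toFinset_card_le _).trans (card_roots' P))
    apply Finset.card_le_card_of_injOn (fun p => p.1)
    · intro p hp
      simp only [Finset.coe_filter, Set.mem_setOf_eq] at hp
      obtain ⟨hpX, hz, hc⟩ := hp
      simp only [Finset.mem_coe, Multiset.mem_toFinset, mem_roots hP0]
      apply hP p (hX p hpX).2 hz
      unfold cw at hc
      simp only [hz, ← mul_assoc] at hc
      rw [← Finset.sum_mul] at hc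
      exact (mul_eq_zero.mp hc).resolve_right (inv_ne_zero (pow_ne_zero _ (hX p hpX).2))
    · intro p hp p' hp' h
      simp only [Finset.coe_filter, Set.mem_setOf_eq] at hp hp'
      refine Prod.ext h ?_
      have h1 := hp.2.1
      have h2 := hp'.2.1
      unfold zmap at h1 h2
      simp only at h
      rw [h] at h1
      exact add_right_cancel (h1.trans h2.symm)
  have hinj : Function.Injective (encode (t := t) j0 W e) := by
    rw [← LinearMap.ker_eq_bot, LinearMap.ker_eq_bot']
    intro v hv
    have hv0 : ∀ p ∈ X', cw j0 W v p = 0 := by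
      intro p hp
      have := congrFun hv (e0.symm ⟨p, hp⟩)
      simpa [encode, e] using this
    have hl : ∀ b ∈ A, lcoef j0 v b = 0 := by
      intro b hb
      by_contra hne
      have h1 := hzl b v hne
      have h2 := hfib b hb
      have h3 : X'.filter (fun p => zmap p = b ∧ cw j0 W v p = 0) =
          X'.filter (fun p => zmap p = b) := by
        apply Finset.filter_congr
        intro p hp
        simp [hv0 p hp]
      rw [h3, h2] at h1
      omega
    have hp0 : ∀ j, lpoly j0 v j = 0 := by
      intro j
      apply eq_zero_of_natDegree_lt_card_of_eval_eq_zero' _ A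
      · intro b hb
        rw [lpoly_eval, hl b hb]; rfl
      · rw [hA]; exact (lpoly_natDegree _ _ _).trans_lt htm
    refine Prod.ext ?_ ?_
    · funext i j
      rw [← lpoly_coeff j0 v j i, hp0]; simp
    · rw [← lpoly_coeff_top j0 v, hp0]; simp
  refine ⟨LinearMap.range (encode (t := t) j0 W e), ?_, ⟨?_, ?_⟩, ?_, ?_⟩
  · rw [LinearMap.finrank_range_of_inj hinj]
    simp [Module.finrank_prod, Module.finrank_pi_fintype, mul_comm]
  · rintro _ ⟨v, rfl⟩ hne
    obtain ⟨g, hgL, hg⟩ := cw_global h2F j0 W hW0 hWL v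
    have hgz : ∀ p ∈ X', g p = 0 ↔ cw j0 W v p = 0 := by
      intro p hp
      rw [hg p (hX p hp).2, mul_eq_zero, or_iff_right (pow_ne_zero _ (hX p hp).2)]
    have hz := hgL.zeros h2F X' (fun p hp => (hX p hp).1) (by
      by_contra! hall
      apply hne
      funext i
      exact (hgz _ (heX i)).mp (hall _ (heX i)))
    rw [Finset.filter_congr hgz] at hz
    have h1 : hammingWt (encode j0 W e v) = (X'.filter (fun p => cw j0 W v p ≠ 0)).card :=
      hcnt (fun p => cw j0 W v p ≠ 0)
    have h2 := Finset.card_filter_add_card_filter_not (s := X') (fun p => cw j0 W v p = 0)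
    rw [h1]
    rw [hXcard] at h2
    change _ ≤ (X'.filter (fun p => ¬ (cw j0 W v p = 0))).card
    omega
  · obtain ⟨S, hSA, hSc⟩ := Finset.exists_subset_card_eq (s := A) (n := t) (by omega)
    let Pm : F[X] := ∏ a ∈ S, (X - C a)
    have hPm : Pm.Monic := monic_prod_of_monic _ _ (fun a _ => monic_X_sub_C a)
    have hPd : Pm.natDegree = t := by
      rw [natDegree_prod_of_monic _ _ (fun a _ => monic_X_sub_C a)]
      simp [hSc]
    let v : (Fin t → Fin r → F) × F := (fun i j => if j = j0 then Pm.coeff i else 0, 1)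
    have hcw : ∀ p ∈ X', cw j0 W v p = Pm.eval (zmap p) := by
      intro p hp
      unfold cw
      rw [Finset.sum_eq_single j0]
      · rw [hW0, mul_inv_cancel₀ (pow_ne_zero _ (hX p hp).2), mul_one]
        unfold lcoef
        simp only [v, if_true]
        rw [eval_eq_sum_range, hPd, Finset.sum_range_succ, Finset.sum_range]
        have : Pm.coeff t = 1 := by rw [← hPd]; exact hPm
        rw [this]
        congr 1
        apply Finset.sum_congr rfl; intro i _; ring
      · intro j _ hj
        have : lcoef j0 v (zmap p) j = 0 := by
          unfold lcoef
          simp [v, hj]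
        rw [this, zero_mul]
      · simp
    have hcz : ∀ p ∈ X', (cw j0 W v p ≠ 0 ↔ ¬ zmap p ∈ S) := by
      intro p hp
      rw [hcw p hp, eval_prod, Finset.prod_ne_zero_iff]
      simp only [eval_sub, eval_X, eval_C]
      constructor
      · intro h hs; exact h _ hs (sub_self _)
      · intro h a ha h0
        exact h (sub_eq_zero.mp h0 ▸ ha)
    have hwt : hammingWt (encode j0 W e v) = 9 * (m - t) := by
      have h1 : hammingWt (encode j0 W e v) = (X'.filter (fun p => cw j0 W v p ≠ 0)).card :=
        hcnt (fun p => cw j0 W v p ≠ 0)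
      rw [h1, Finset.filter_congr hcz]
      have h2 := Finset.card_filter_add_card_filter_not (s := X') (fun p => zmap p ∈ S)
      have h3 : (X'.filter (fun p => zmap p ∈ S)).card = 9 * t := by
        have hm' : ∀ p ∈ X'.filter (fun p => zmap p ∈ S), zmap p ∈ S :=
          fun p hp => (Finset.mem_filter.mp hp).2
        rw [Finset.card_eq_sum_card_fiberwise hm']
        rw [← hSc, mul_comm, ← smul_eq_mul, ← Finset.sum_const]
        apply Finset.sum_congr rfl
        intro a ha
        rw [← hfib a (hSA ha), Finset.filter_filter]
        congr 1
        apply Finset.filter_congr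
        intro p _
        constructor
        · exact fun h => h.2
        · exact fun h => ⟨h ▸ ha, h⟩
      omega
    refine ⟨_, ⟨v, rfl⟩, ?_, hwt⟩
    intro h0
    rw [h0] at hwt
    have : hammingWt (0 : Fin (9 * m) → F) = 0 := by simp [hammingWt]
    omega
  · intro i
    refine ⟨Finset.univ.filter (fun k => zmap (e k) = zmap (e i)), by simp, ?_, ?_⟩
    · rw [hcnt (fun p => zmap p = zmap (e i)), hfib _ (hXA _ (heX i))]
      omega
    · rintro _ ⟨v, rfl⟩ ⟨k, hk, hne⟩
      simp only [Finset.mem_filter, Finset.mem_univ, true_and] at hk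
      have hl : lcoef j0 v (zmap (e i)) ≠ 0 := by
        intro h0
        apply hne
        change cw j0 W v (e k) = 0
        unfold cw
        rw [hk, h0]
        simp
      have h1 := hzl _ v hl
      rw [Finset.filter_filter]
      have h2 := hcnt (fun p => zmap p = zmap (e i) ∧ cw j0 W v p ≠ 0)
      change _ ≤ (Finset.univ.filter (fun k => zmap (e k) = zmap (e i) ∧ cw j0 W v (e k) ≠ 0)).card
      rw [h2]
      have h3 := Finset.card_filter_add_card_filter_not
        (s := X'.filter (fun p => zmap p = zmap (e i))) (fun p => cw j0 W v p = 0)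
      rw [Finset.filter_filter, Finset.filter_filter, hfib _ (hXA _ (heX i))] at h3
      change _ ≤ (X'.filter (fun p => zmap p = zmap (e i) ∧ ¬ (cw j0 W v p = 0))).card
      omega
  · unfold SingletonOptimal
    have : (r * t + 1 + r - 1) / r = t + 1 := by
      have : r * t + 1 + r - 1 = (t + 1) * r := by
        rw [add_mul, mul_comm t r]; omega
      rw [this, Nat.mul_div_cancel _ hr0]
    rw [this]
    push_cast [Nat.cast_sub htm.le, Nat.cast_sub (show r ≤ 10 by omega)]
    ring

lemma code2 (h2F : (2 : F) = 0) (m t : ℕ) (htm : t < m)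
    (X' : Finset (F × F)) (A : Finset F) (hA : A.card = m)
    (hX : ∀ p ∈ X', p.2 ^ 2 + p.2 = p.1 ^ 3 ∧ p.1 ≠ 0)
    (hXA : ∀ p ∈ X', zmap p ∈ A)
    (hfib : ∀ a ∈ A, (X'.filter (fun p => zmap p = a)).card = 9) :
    ExistsOptimalLRC F (9 * m) (2 * t + 1) (9 * (m - t)) 2 8 := by
  have hx := InL.x (F := F)
  refine core h2F m t 2 htm (by norm_num) 0 X' A hA hX hXA hfib
    ![fun p => p.1 ^ 3, fun p => p.1 ^ 4] (fun p => rfl) ?_ ?_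
  · intro j
    fin_cases j
    · exact (hx.pow h2F 3).mono (by norm_num)
    · exact (hx.pow h2F 4).mono (by norm_num)
  · intro b v hv
    refine ⟨C (v 1) * X + C (v 0), ?_, ?_, ?_⟩
    · intro h0
      apply hv
      have c0 := congrArg (fun P => coeff P 0) h0
      have c1 := congrArg (fun P => coeff P 1) h0
      simp [coeff_X, coeff_C] at c0 c1
      funext j
      fin_cases j
      · exact c0
      · exact c1
    · have := natDegree_linear_le (a := v 1) (b := v 0)
      omega
    · intro p hp _ h
      simp [Fin.sum_univ_two] at h
      have : p.1 ^ 3 * (v 1 * p.1 + v 0) = 0 := by linear_combination h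
      simpa using (mul_eq_zero.mp this).resolve_left (pow_ne_zero _ hp)

lemma code7 (h2F : (2 : F) = 0) (m t : ℕ) (htm : t < m)
    (X' : Finset (F × F)) (A : Finset F) (hA : A.card = m)
    (hX : ∀ p ∈ X', p.2 ^ 2 + p.2 = p.1 ^ 3 ∧ p.1 ≠ 0)
    (hXA : ∀ p ∈ X', zmap p ∈ A)
    (hfib : ∀ a ∈ A, (X'.filter (fun p => zmap p = a)).card = 9) :
    ExistsOptimalLRC F (9 * m) (7 * t + 1) (9 * (m - t)) 7 3 := by
  have hx := InL.x (F := F)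
  have hy := InL.y (F := F)
  refine core h2F m t 7 htm (by norm_num) 0 X' A hA hX hXA hfib
    ![fun p => p.1 ^ 3, fun p => p.1 ^ 2, fun p => p.1, fun _ => 1, fun p => p.2,
      fun p => p.1 * p.2, fun p => p.1 ^ 2 * p.2] (fun p => rfl) ?_ ?_
  · intro j
    fin_cases j
    · exact (hx.pow h2F 3).mono (by norm_num)
    · exact (hx.pow h2F 2).mono (by norm_num)
    · exact hx.mono (by norm_num)
    · exact InL.const _ 1
    · exact hy.mono (by norm_num)
    · exact (hx.mul h2F hy).mono (by norm_num)
    · exact ((hx.pow h2F 2).mul h2F hy).mono (by norm_num)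
  · intro b v hv
    refine ⟨C (v 4) + C (v 5) * X + C (v 6) * X ^ 2 + C (v 3 + b * v 4) * X ^ 3
      + C (v 2 + b * v 5) * X ^ 4 + C (v 1 + b * v 6) * X ^ 5 + C (v 0) * X ^ 6, ?_, ?_, ?_⟩
    · intro h0
      apply hv
      have c0 := congrArg (fun P => coeff P 0) h0
      have c1 := congrArg (fun P => coeff P 1) h0
      have c2 := congrArg (fun P => coeff P 2) h0
      have c3 := congrArg (fun P => coeff P 3) h0
      have c4 := congrArg (fun P => coeff P 4) h0
      have c5 := congrArg (fun P => coeff P 5) h0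
      have c6 := congrArg (fun P => coeff P 6) h0
      simp only [coeff_add, coeff_C_mul, coeff_X_pow, coeff_X, coeff_C, coeff_zero] at c0 c1 c2 c3 c4 c5 c6
      norm_num at c0 c1 c2 c3 c4 c5 c6
      rw [c0] at c3
      rw [c1] at c4
      rw [c2] at c5
      simp only [mul_zero, add_zero] at c3 c4 c5
      funext j
      fin_cases j
      · exact c6
      · exact c5
      · exact c4
      · exact c3
      · exact c0
      · exact c1
      · exact c2
    · refine Nat.succ_le_succ ?_
      compute_degree
    · intro p hp hz h
      have hy : p.1 ^ 3 * p.2 = b * p.1 ^ 3 - 1 := by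
        rw [← hz]; unfold zmap
        rw [add_mul, inv_mul_cancel₀ (pow_ne_zero _ hp)]; ring
      simp [Fin.sum_univ_succ] at h
      simp only [eval_add, eval_mul, eval_C, eval_pow, eval_X]
      linear_combination p.1 ^ 3 * h - (v 4 + v 5 * p.1 + v 6 * p.1 ^ 2) * hy
        + (v 4 + v 5 * p.1 + v 6 * p.1 ^ 2) * h2F

end core

section fin
variable {F : Type*} [Field F] [Fintype F] [DecidableEq F]

lemma exists_w (s : ℕ) (hF : Fintype.card F = 2 ^ (4 * s + 2)) (h2F : (2 : F) = 0) :
    ∃ w : F, w ^ 2 + w + 1 = 0 := by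
  haveI : Fact (Nat.Prime 3) := ⟨by norm_num⟩
  have h3 : 3 ∣ Fintype.card Fˣ := by
    rw [Fintype.card_units, hF]
    have : 2 ^ (4 * s + 2) % 3 = 1 := by
      rw [show 4 * s + 2 = 2 * (2 * s + 1) by ring, pow_mul, Nat.pow_mod]; simp
    omega
  obtain ⟨u, hu⟩ := exists_prime_orderOf_dvd_card 3 h3
  have hu3 : (u : F) ^ 3 = 1 := by
    have := pow_orderOf_eq_one u
    rw [hu] at this
    rw [← Units.val_pow_eq_pow_val, this]; simp
  have hu1 : (u : F) ≠ 1 := by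
    intro h
    have : u = 1 := Units.ext h
    rw [this] at hu
    simp at hu
  refine ⟨u, ?_⟩
  have : ((u : F) - 1) * ((u : F) ^ 2 + u + 1) = 0 := by linear_combination hu3
  exact (mul_eq_zero.mp this).resolve_left (sub_ne_zero.mpr hu1)

end fin
/-- For `q = 4^(2s+1) = 2^(4s+2)`, for all
`1 ≤ t < m ≤ (q + 2^(2s+2) - 8)/9`, there exist an optimal `(7, 3)`-LRC with
parameters `[9m, 7t + 1, 9(m-t)]_q` and an optimal `(2, 8)`-LRC with parameters
`[9m, 2t + 1, 9(m-t)]_q`. -/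
theorem stmt_6 (s : ℕ) (hs : 0 < s) (q : ℕ) (hq : q = 2 ^ (4 * s + 2))
    (t m : ℕ) (ht : 1 ≤ t) (htm : t < m)
    (hm : (m : ℚ) ≤ ((q : ℚ) + 2 ^ (2 * s + 2) - 8) / 9)
    (F : Type*) [Field F] [Fintype F] [DecidableEq F] (hF : Fintype.card F = q) :
    ExistsOptimalLRC F (9 * m) (7 * t + 1) (9 * (m - t)) 7 3 ∧
    ExistsOptimalLRC F (9 * m) (2 * t + 1) (9 * (m - t)) 2 8 := by
  subst hq
  have h2F : (2 : F) = 0 := by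
    have : ((Fintype.card F : ℕ) : F) = 0 := Nat.cast_card_eq_zero F
    rw [hF] at this
    push_cast at this
    exact pow_eq_zero_iff (by omega) |>.mp this
  have hsq : ∀ c : F, ∃ x, x ^ 2 = c := by
    intro c
    have hinj : Function.Injective (fun x : F => x ^ 2) := by
      intro a b h
      simp only at h
      have : (a - b) ^ 2 = 0 := by linear_combination h + (b ^ 2 - a * b) * h2F
      exact sub_eq_zero.mp (pow_eq_zero_iff (by norm_num) |>.mp this)
    exact (Finite.surjective_of_injective hinj) c
  obtain ⟨w, hw⟩ := exists_w s hF h2F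
  have hS := S_sq h2F hsq hw
  have hN := card_curvePts h2F
  have hG := card_goodPts h2F hw
  set S := ∑ x : F, psi (x ^ 3) with hSdef
  set B := (goodPts F).image zmap with hB
  have hGB : (goodPts F).card = 9 * B.card := by
    rw [Finset.card_eq_sum_card_image zmap, mul_comm, ← smul_eq_mul, ← Finset.sum_const]
    apply Finset.sum_congr rfl
    intro a ha
    obtain ⟨p, hp, rfl⟩ := Finset.mem_image.mp ha
    exact card_fibre h2F hw hp
  rw [hF] at hS hN
  have hSv : S = 2 ^ (2 * s + 2) := by
    have h0 : (S - 2 ^ (2 * s + 2)) * (S + 2 ^ (2 * s + 2)) = 0 := by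
      have : (2 : ℤ) ^ (4 * s + 2) * 4 = (2 ^ (2 * s + 2)) ^ 2 := by
        rw [← pow_mul]
        rw [show (2 * s + 2) * 2 = 4 * s + 2 + 2 by ring]; ring
      push_cast at hS
      linear_combination hS + this
    rcases mul_eq_zero.mp h0 with h | h
    · linarith
    · exfalso
      have e1 : (2 : ℤ) ^ (4 * s + 2) % 3 = 1 := by
        rw [show 4 * s + 2 = 2 * (2 * s + 1) by ring, pow_mul]
        have : ((2 : ℤ) ^ 2) ≡ 1 [ZMOD 3] := by decide
        have := this.pow (2 * s + 1)
        rw [one_pow] at this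
        exact this
      have e2 : (2 : ℤ) ^ (2 * s + 2) % 3 = 1 := by
        rw [show 2 * s + 2 = 2 * (s + 1) by ring, pow_mul]
        have : ((2 : ℤ) ^ 2) ≡ 1 [ZMOD 3] := by decide
        have := this.pow (s + 1)
        rw [one_pow] at this
        exact this
      push_cast at hN
      omega
  have hmB : m ≤ B.card := by
    have h1 : (m : ℚ) * 9 ≤ (2 : ℚ) ^ (4 * s + 2) + 2 ^ (2 * s + 2) - 8 := by
      rw [le_div_iff₀ (by norm_num)] at hm
      push_cast at hm
      exact hm
    have h2 : (m : ℤ) * 9 ≤ (2 : ℤ) ^ (4 * s + 2) + 2 ^ (2 * s + 2) - 8 := by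
      exact_mod_cast h1
    rw [hSv] at hN
    push_cast at hN
    omega
  obtain ⟨A, hAB, hAc⟩ := Finset.exists_subset_card_eq hmB
  set X' := (goodPts F).filter (fun p => zmap p ∈ A) with hX'
  have hX : ∀ p ∈ X', p.2 ^ 2 + p.2 = p.1 ^ 3 ∧ p.1 ≠ 0 := by
    intro p hp
    have hp := (mem_goodPts p).mp (Finset.mem_filter.mp hp).1
    refine ⟨hp.1, fun h => hp.2.1 ?_⟩
    rw [hp.1, h]; simp
  have hXA : ∀ p ∈ X', zmap p ∈ A := fun p hp => (Finset.mem_filter.mp hp).2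
  have hfib : ∀ a ∈ A, (X'.filter (fun p => zmap p = a)).card = 9 := by
    intro a ha
    obtain ⟨p, hp, rfl⟩ := Finset.mem_image.mp (hAB ha)
    rw [← card_fibre h2F hw hp, hX', Finset.filter_filter]
    congr 1
    apply Finset.filter_congr
    intro p' _
    exact ⟨fun h => h.2, fun h => ⟨h ▸ ha, h⟩⟩
  exact ⟨code7 h2F m t htm X' A hAc hX hXA hfib, code2 h2F m t htm X' A hAc hX hXA hfib⟩
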